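/- Let μ ≥ 1. Let X' ∈ ℝ^{m'×2} (m' ≥ 1) and X'' ∈ ℝ^{m''×2} (m'' ≥ 1) each be μ-complex in both the ℓ₀ and ℓ₁ sense, with ‖X''η‖₁ ≤ 2μ·‖X'η‖₁ for all η ∈ ℝ². Let X ∈ ℝ^{m×2} (m = m'+m'') be their vertical concatenation, and let c_1,…,c_m ∈ (0,1/2) with E ≥ max_i ln(1/c_i). Define f₁(Xβ) = ∑_{i ∈ rows of X'} g_{c_i}(x_i·β) and f₂(Xβ) = ∑_{i ∈ rows of X''} h_{c_i}(x_i·β). Then there exist nonnegative reals s_1,…,s_m with ∑_{i=1}^m s_i ≤ 170·μ²·√m + 7·E·μ such that for every i ∈ [m] and every β ∈ ℝ²: if row i belongs to X' then g_{c_i}(x_i·β) ≤ s_i·(f₁(Xβ)+f₂(Xβ)), and if row i belongs to X'' then h_{c_i}(x_i·β) ≤ s_i·(f₁(Xβ)+f₂(Xβ)). In particular, the total sensitivity of the 3PL objective f₁+f₂ is at most 170·μ²·√m + 7·E·μ = O(√m). -/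

import Mathlib

/-!
Every summand is at most `2 + |xᵢ·β|`, uniformly in `c`, so it suffices to bound the shares of the
constant and of `|xᵢ·β|` in the objective `f = f₁ + f₂`. For the constant: by ℓ₀-complexity a
fraction `1/(1+μ)` of the rows of `X'` has `xᵢ·β ≥ 0`, where `g ≥ 1/4`, and the same fraction of the
rows of `X''` has `xᵢ·β ≤ 0`, where `h ≥ 1/4`; hence `m ≤ 4(1+μ) f`. For `|xᵢ·β|`: ℓ₁-complexity
gives `‖X'β‖₁ ≤ (1+μ) f₁`, which the ratio hypothesis transfers to `‖X''β‖₁`, and if `P` is the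
orthogonal projection onto the column space of a matrix `A`, then
`|(Aβ)ᵢ| = |⟨P eᵢ, Aβ⟩| ≤ ‖P eᵢ‖ ‖Aβ‖₂ ≤ ‖P eᵢ‖ ‖Aβ‖₁`. The leverage scores `‖P eᵢ‖²` sum to
`rank A`, so Cauchy–Schwarz bounds `∑ ‖P eᵢ‖` by `√(n · rank A)`.
-/

open Finset Matrix

/-- `g_c(z) = ln(1+e^z) - ln(1-c)`. -/
noncomputable def gfun (c z : ℝ) : ℝ := Real.log (1 + Real.exp z) - Real.log (1 - c)

/-- `h_c(z) = -ln(c + (1-c)/(1+e^{-z}))`. -/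
noncomputable def hfun (c z : ℝ) : ℝ := -Real.log (c + (1 - c) / (1 + Real.exp (-z)))

/-- The rows `x` are `μ`-complex in the ℓ₁ sense. -/
def Mu1Complex {ι : Type} [Fintype ι] {d : ℕ} (x : ι → Fin d → ℝ) (μ : ℝ) : Prop :=
  ∀ η : Fin d → ℝ,
    ∑ i ∈ Finset.univ.filter (fun i => 0 ≤ x i ⬝ᵥ η), x i ⬝ᵥ η ≤
      μ * ∑ i ∈ Finset.univ.filter (fun i => x i ⬝ᵥ η < 0), |x i ⬝ᵥ η|

/-- The rows `x` are `μ`-complex in the ℓ₀ sense. -/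
def Mu0Complex {ι : Type} [Fintype ι] {d : ℕ} (x : ι → Fin d → ℝ) (μ : ℝ) : Prop :=
  ∀ η : Fin d → ℝ, η ≠ 0 →
    ((Finset.univ.filter fun i => 0 ≤ x i ⬝ᵥ η).card : ℝ) ≤
      μ * ((Finset.univ.filter fun i => x i ⬝ᵥ η < 0).card : ℝ)

section Projection

variable {𝕜 E ι : Type*} [RCLike 𝕜] [NormedAddCommGroup E] [InnerProductSpace 𝕜 E] [Fintype ι]

lemma norm_inner_le_norm_starProjection_mul_norm (K : Submodule 𝕜 E) [K.HasOrthogonalProjection]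
    (v : E) {y : E} (hy : y ∈ K) : ‖inner 𝕜 v y‖ ≤ ‖K.starProjection v‖ * ‖y‖ := by
  have inner_eq : inner 𝕜 v y = inner 𝕜 (K.starProjection v) y := by
    rw [K.inner_starProjection_left_eq_right, Submodule.starProjection_eq_self_iff.2 hy]
  exact inner_eq ▸ norm_inner_le_norm _ _

lemma sum_sq_norm_starProjection (b : OrthonormalBasis ι 𝕜 E) (K : Submodule 𝕜 E)
    [FiniteDimensional 𝕜 K] :
    ∑ i, ‖K.starProjection (b i)‖ ^ 2 = Module.finrank 𝕜 K := by
  let u := stdOrthonormalBasis 𝕜 K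
  have parseval_in_K (v : E) : ‖K.starProjection v‖ ^ 2 = ∑ k, ‖inner 𝕜 (u k : E) v‖ ^ 2 := by
    rw [Submodule.starProjection_apply, Submodule.norm_coe, ← u.sum_sq_norm_inner_right]
    simp only [Submodule.inner_orthogonalProjectionOnto_eq_of_mem_left]
  simp only [parseval_in_K]
  rw [sum_comm]
  simp only [b.sum_sq_norm_inner_left, Submodule.norm_coe, u.norm_eq_one, one_pow, sum_const,
    card_univ, Fintype.card_fin, nsmul_eq_mul, mul_one]

lemma sum_norm_starProjection_le_sqrt (b : OrthonormalBasis ι 𝕜 E) (K : Submodule 𝕜 E)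
    [FiniteDimensional 𝕜 K] :
    ∑ i, ‖K.starProjection (b i)‖ ≤ √(Fintype.card ι * Module.finrank 𝕜 K) := by
  apply Real.le_sqrt_of_sq_le
  rw [← sum_sq_norm_starProjection b K, ← card_univ]
  exact sq_sum_le_card_mul_sum_sq

lemma euclideanNorm_le_sum_norm (y : EuclideanSpace 𝕜 ι) : ‖y‖ ≤ ∑ i, ‖y i‖ := by
  rw [EuclideanSpace.norm_eq]
  exact Real.sqrt_le_iff.2 ⟨sum_nonneg fun _ _ => norm_nonneg _,
    sum_sq_le_sq_sum_of_nonneg fun _ _ => norm_nonneg _⟩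

end Projection

section Leverage

variable {𝕜 ι n : Type*} [RCLike 𝕜] [Fintype ι] [Fintype n] [DecidableEq n]

/-- The square root `‖P eᵢ‖` of the `i`-th leverage score of `A`, where `P` is the orthogonal
projection onto the column space of `A`. It bounds the share of the `i`-th entry in the `ℓ₁` norm of
any `A *ᵥ β`. Defining it by the projection instead of `√(aᵢᴴ (AᴴA)⁻¹ aᵢ)` makes it meaningful for
rank-deficient `A`. -/
noncomputable def sqrtLeverage (A : Matrix ι n 𝕜) (i : ι) : ℝ :=
  ‖(LinearMap.range (toEuclideanLin A)).starProjection (EuclideanSpace.basisFun ι 𝕜 i)‖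

lemma sqrtLeverage_nonneg (A : Matrix ι n 𝕜) (i : ι) : 0 ≤ sqrtLeverage A i :=
  norm_nonneg _

lemma sum_sqrtLeverage_le (A : Matrix ι n 𝕜) :
    ∑ i, sqrtLeverage A i ≤ √(Fintype.card ι * A.rank) := by
  rw [A.rank_eq_finrank_range_toLin (EuclideanSpace.basisFun ι 𝕜).toBasis
    (EuclideanSpace.basisFun n 𝕜).toBasis, ← toEuclideanLin_eq_toLin_orthonormal]
  exact sum_norm_starProjection_le_sqrt _ _

lemma norm_mulVec_apply_le_sqrtLeverage_mul (A : Matrix ι n 𝕜) (β : n → 𝕜) (i : ι) :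
    ‖(A *ᵥ β) i‖ ≤ sqrtLeverage A i * ∑ j, ‖(A *ᵥ β) j‖ := by
  let y : EuclideanSpace 𝕜 ι := toEuclideanLin A (WithLp.toLp 2 β)
  have hy : y ∈ LinearMap.range (toEuclideanLin A) := LinearMap.mem_range_self _ _
  calc ‖(A *ᵥ β) i‖ = ‖inner 𝕜 (EuclideanSpace.basisFun ι 𝕜 i) y‖ := by
        rw [EuclideanSpace.basisFun_inner]; rfl
    _ ≤ sqrtLeverage A i * ‖y‖ := norm_inner_le_norm_starProjection_mul_norm _ _ hy
    _ ≤ sqrtLeverage A i * ∑ j, ‖(A *ᵥ β) j‖ :=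
        mul_le_mul_of_nonneg_left (euclideanNorm_le_sum_norm y) (sqrtLeverage_nonneg A i)

end Leverage

section Summands

lemma log_one_add_exp_le_log_two_add_abs (z : ℝ) :
    Real.log (1 + Real.exp z) ≤ Real.log 2 + |z| := by
  have exp_le : Real.exp z ≤ Real.exp |z| := Real.exp_le_exp.2 (le_abs_self z)
  have one_le : 1 ≤ Real.exp |z| := Real.one_le_exp (abs_nonneg z)
  calc Real.log (1 + Real.exp z) ≤ Real.log (2 * Real.exp |z|) :=
        Real.log_le_log (by positivity) (by linarith)
    _ = Real.log 2 + |z| := by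
        rw [Real.log_mul two_ne_zero (Real.exp_ne_zero _), Real.log_exp]

lemma neg_log_sigmoid (z : ℝ) : -Real.log (Real.sigmoid z) = Real.log (1 + Real.exp (-z)) := by
  rw [Real.sigmoid_def, Real.log_inv, neg_neg]

variable {c : ℝ}

lemma log_one_add_exp_le_gfun (hc0 : 0 ≤ c) (hc1 : c < 1) (z : ℝ) :
    Real.log (1 + Real.exp z) ≤ gfun c z :=
  le_sub_self_iff _ |>.2 (Real.log_nonpos (by linarith) (by linarith))

lemma posPart_le_gfun (hc0 : 0 ≤ c) (hc1 : c < 1) (z : ℝ) : z⁺ ≤ gfun c z := by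
  refine le_trans (sup_le ?_ ?_) (log_one_add_exp_le_gfun hc0 hc1 z)
  · rw [Real.le_log_iff_exp_le (by positivity)]
    linarith
  · exact Real.log_nonneg (by linarith [Real.exp_pos z])

lemma log_two_le_gfun (hc0 : 0 ≤ c) (hc1 : c < 1) {z : ℝ} (hz : 0 ≤ z) :
    Real.log 2 ≤ gfun c z :=
  (Real.log_le_log two_pos (by linarith [Real.one_le_exp hz])).trans
    (log_one_add_exp_le_gfun hc0 hc1 z)

lemma gfun_le_two_mul_log_two_add_abs (hc : c ≤ 1 / 2) (z : ℝ) :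
    gfun c z ≤ 2 * Real.log 2 + |z| := by
  have neg_log_le : -Real.log (1 - c) ≤ Real.log 2 := by
    rw [← Real.log_inv]
    exact Real.log_le_log (inv_pos.2 (by linarith)) (inv_le_of_inv_le₀ two_pos (by linarith))
  unfold gfun
  linarith [log_one_add_exp_le_log_two_add_abs z]

lemma hfun_eq_neg_log_sigmoid_mix (c z : ℝ) :
    hfun c z = -Real.log (c + (1 - c) * Real.sigmoid z) := by
  rw [hfun, Real.sigmoid_def, div_eq_mul_inv]

lemma sigmoid_le_sigmoid_mix (hc0 : 0 ≤ c) (z : ℝ) :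
    Real.sigmoid z ≤ c + (1 - c) * Real.sigmoid z := by
  nlinarith [Real.sigmoid_le_one z]

lemma hfun_nonneg (hc0 : 0 ≤ c) (hc1 : c ≤ 1) (z : ℝ) : 0 ≤ hfun c z := by
  have mix_le_one : c + (1 - c) * Real.sigmoid z ≤ 1 := by nlinarith [Real.sigmoid_le_one z]
  rw [hfun_eq_neg_log_sigmoid_mix, neg_nonneg]
  exact Real.log_nonpos ((Real.sigmoid_nonneg z).trans (sigmoid_le_sigmoid_mix hc0 z)) mix_le_one

lemma quarter_le_hfun (hc0 : 0 ≤ c) (hc : c ≤ 1 / 2) {z : ℝ} (hz : z ≤ 0) :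
    1 / 4 ≤ hfun c z := by
  have sigmoid_le_half : Real.sigmoid z ≤ 2⁻¹ := Real.sigmoid_zero ▸ Real.sigmoid_le hz
  have mix_le : c + (1 - c) * Real.sigmoid z ≤ 3 / 4 := by nlinarith
  have mix_pos := (Real.sigmoid_pos z).trans_le (sigmoid_le_sigmoid_mix hc0 z)
  rw [hfun_eq_neg_log_sigmoid_mix]
  linarith [Real.log_le_sub_one_of_pos mix_pos]

lemma hfun_le_log_two_add_abs (hc0 : 0 ≤ c) (z : ℝ) : hfun c z ≤ Real.log 2 + |z| :=
  calc hfun c z ≤ -Real.log (Real.sigmoid z) := by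
        rw [hfun_eq_neg_log_sigmoid_mix]
        exact neg_le_neg (Real.log_le_log (Real.sigmoid_pos z) (sigmoid_le_sigmoid_mix hc0 z))
    _ = Real.log (1 + Real.exp (-z)) := neg_log_sigmoid z
    _ ≤ Real.log 2 + |z| := abs_neg z ▸ log_one_add_exp_le_log_two_add_abs (-z)

end Summands

section Complexity

variable {ι : Type} [Fintype ι] {d : ℕ} {x : ι → Fin d → ℝ} {μ : ℝ}

lemma Mu0Complex.card_le_mul_card_nonneg (hx : Mu0Complex x μ) (hμ : 0 ≤ μ) (β : Fin d → ℝ) :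
    (Fintype.card ι : ℝ) ≤ (1 + μ) * #{i | 0 ≤ x i ⬝ᵥ β} := by
  rcases eq_or_ne β 0 with rfl | hβ
  · simp only [dotProduct_zero, le_refl, filter_true, card_univ]
    exact le_mul_of_one_le_left (Nat.cast_nonneg _) (by linarith)
  have card_nonpos_le : (#{i | x i ⬝ᵥ β ≤ 0} : ℝ) ≤ μ * #{i | 0 < x i ⬝ᵥ β} := by
    simpa only [dotProduct_neg, Left.neg_neg_iff, Left.nonneg_neg_iff]
      using hx (-β) (neg_ne_zero.2 hβ)
  have card_split : (#{i | x i ⬝ᵥ β ≤ 0} : ℝ) + #{i | 0 < x i ⬝ᵥ β} = Fintype.card ι := by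
    simp only [← not_le]
    exact_mod_cast card_filter_add_card_filter_not (s := univ) fun i => x i ⬝ᵥ β ≤ 0
  have card_pos_le : (#{i | 0 < x i ⬝ᵥ β} : ℝ) ≤ #{i | 0 ≤ x i ⬝ᵥ β} :=
    mod_cast card_le_card (monotone_filter_right _ fun _ _ => le_of_lt)
  calc (Fintype.card ι : ℝ) ≤ (1 + μ) * #{i | 0 < x i ⬝ᵥ β} := by linarith
    _ ≤ (1 + μ) * #{i | 0 ≤ x i ⬝ᵥ β} := by gcongr

lemma Mu0Complex.mul_card_le_mul_sum (hx : Mu0Complex x μ) (hμ : 0 ≤ μ) (β : Fin d → ℝ) {a : ℝ}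
    (ha : 0 ≤ a) {w : ι → ℝ} (hw : ∀ i, 0 ≤ w i) (haw : ∀ i, 0 ≤ x i ⬝ᵥ β → a ≤ w i) :
    a * Fintype.card ι ≤ (1 + μ) * ∑ i, w i := by
  have card_mul_le : #{i | 0 ≤ x i ⬝ᵥ β} * a ≤ ∑ i, w i := by
    rw [← nsmul_eq_mul]
    exact (card_nsmul_le_sum _ _ _ fun i hi => haw i (mem_filter.1 hi).2).trans
      (sum_le_univ_sum_of_nonneg hw)
  calc a * Fintype.card ι ≤ a * ((1 + μ) * #{i | 0 ≤ x i ⬝ᵥ β}) := by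
        gcongr; exact hx.card_le_mul_card_nonneg hμ β
    _ = (1 + μ) * (#{i | 0 ≤ x i ⬝ᵥ β} * a) := by ring
    _ ≤ (1 + μ) * ∑ i, w i := by gcongr

lemma Mu0Complex.neg (hx : Mu0Complex x μ) : Mu0Complex (-x) μ := fun η hη => by
  simpa only [Pi.neg_apply, neg_dotProduct, dotProduct_neg] using hx (-η) (neg_ne_zero.2 hη)

lemma mu1Complex_iff_sum_posPart_le :
    Mu1Complex x μ ↔ ∀ η, ∑ i, (x i ⬝ᵥ η)⁺ ≤ μ * ∑ i, (x i ⬝ᵥ η)⁻ := by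
  have abs_eq_negPart (η : Fin d → ℝ) :
      ∑ i with x i ⬝ᵥ η < 0, |x i ⬝ᵥ η| = ∑ i, (x i ⬝ᵥ η)⁻ := by
    simp only [negPart_eq_ite_lt, ← sum_filter]
    exact sum_congr rfl fun i hi => abs_of_neg (mem_filter.1 hi).2
  simp only [Mu1Complex, abs_eq_negPart, posPart_eq_ite, sum_filter]

lemma Mu1Complex.sum_abs_le_mul_sum_posPart (hx : Mu1Complex x μ) (β : Fin d → ℝ) :
    ∑ i, |x i ⬝ᵥ β| ≤ (1 + μ) * ∑ i, (x i ⬝ᵥ β)⁺ := by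
  have sum_negPart_le : ∑ i, (x i ⬝ᵥ β)⁻ ≤ μ * ∑ i, (x i ⬝ᵥ β)⁺ := by
    simpa only [dotProduct_neg, posPart_neg, negPart_neg]
      using mu1Complex_iff_sum_posPart_le.1 hx (-β)
  simp only [← posPart_add_negPart, sum_add_distrib]
  linarith

end Complexity

section RowSensitivity

variable {ι n : Type*} [Fintype ι] [Fintype n] [DecidableEq n]

/-- An upper bound for the sensitivity of the `i`-th row of `A` in an objective that dominates the
number `m` of summands up to the factor `4K` and the `ℓ₁` norm of `A *ᵥ β` up to the factor `B`: the
first term pays for the constant in `2 + |aᵢ·β|`, the second for `|aᵢ·β|`. -/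
noncomputable def rowSensitivityBound (m K B : ℝ) (A : Matrix ι n ℝ) (i : ι) : ℝ :=
  8 * K / m + B * sqrtLeverage A i

lemma rowSensitivityBound_nonneg {m K B : ℝ} (hm : 0 ≤ m) (hK : 0 ≤ K) (hB : 0 ≤ B)
    (A : Matrix ι n ℝ) (i : ι) : 0 ≤ rowSensitivityBound m K B A i :=
  add_nonneg (by positivity) (mul_nonneg hB (sqrtLeverage_nonneg A i))

lemma le_rowSensitivityBound_mul {m K B f t : ℝ} {A : Matrix ι n ℝ} {β : n → ℝ} {i : ι}
    (hm : Fintype.card ι ≤ m) (hmf : m ≤ 4 * K * f) (hl1 : ∑ j, |A j ⬝ᵥ β| ≤ B * f)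
    (ht : t ≤ 2 + |A i ⬝ᵥ β|) : t ≤ rowSensitivityBound m K B A i * f := by
  have m_pos : 0 < m := hm.trans_lt' (mod_cast Fintype.card_pos_iff.2 ⟨i⟩)
  have const_le : 2 ≤ 8 * K / m * f := by
    rw [div_mul_eq_mul_div, le_div_iff₀ m_pos]
    linarith
  have abs_le : |A i ⬝ᵥ β| ≤ B * sqrtLeverage A i * f :=
    calc |A i ⬝ᵥ β| ≤ sqrtLeverage A i * ∑ j, |A j ⬝ᵥ β| :=
          norm_mulVec_apply_le_sqrtLeverage_mul A β i
      _ ≤ sqrtLeverage A i * (B * f) := mul_le_mul_of_nonneg_left hl1 (sqrtLeverage_nonneg A i)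
      _ = B * sqrtLeverage A i * f := by ring
  rw [rowSensitivityBound, add_mul]
  linarith

lemma sum_rowSensitivityBound_le {m K B : ℝ} (hB : 0 ≤ B) (A : Matrix ι n ℝ)
    (hm : Fintype.card ι ≤ m) :
    ∑ i, rowSensitivityBound m K B A i ≤
      Fintype.card ι * (8 * K / m) + B * √(Fintype.card n * m) := by
  have card_mul_rank_le : (Fintype.card ι : ℝ) * A.rank ≤ Fintype.card n * m := by
    have rank_le : (A.rank : ℝ) ≤ Fintype.card n := mod_cast A.rank_le_card_width
    rw [mul_comm]
    gcongr
  simp only [rowSensitivityBound, sum_add_distrib, sum_const, card_univ, nsmul_eq_mul, ← mul_sum]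
  gcongr
  exact (sum_sqrtLeverage_le A).trans (Real.sqrt_le_sqrt card_mul_rank_le)

end RowSensitivity

section Objective

variable {ι κ : Type} [Fintype ι] [Fintype κ] {d : ℕ} {c : ι ⊕ κ → ℝ} {X' : ι → Fin d → ℝ}
  {X'' : κ → Fin d → ℝ} {μ ρ : ℝ}

/-- The 3PL objective `f₁(Xβ) + f₂(Xβ)`, where `X` has the rows of `X'` (contributing to `f₁`)
followed by those of `X''` (contributing to `f₂`). -/
noncomputable def threePLObjective (c : ι ⊕ κ → ℝ) (X' : ι → Fin d → ℝ) (X'' : κ → Fin d → ℝ)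
    (β : Fin d → ℝ) : ℝ :=
  ∑ i, gfun (c (Sum.inl i)) (X' i ⬝ᵥ β) + ∑ i, hfun (c (Sum.inr i)) (X'' i ⬝ᵥ β)

lemma card_le_mul_threePLObjective (hμ : 0 ≤ μ) (hX' : Mu0Complex X' μ) (hX'' : Mu0Complex X'' μ)
    (hc : ∀ i, 0 ≤ c i ∧ c i ≤ 1 / 2) (β : Fin d → ℝ) :
    (Fintype.card ι + Fintype.card κ : ℝ) ≤ 4 * (1 + μ) * threePLObjective c X' X'' β := by
  have card_left := hX'.mul_card_le_mul_sum hμ β (a := 1 / 4)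
    (w := fun i => gfun (c (Sum.inl i)) (X' i ⬝ᵥ β)) (by norm_num)
    (fun i => (posPart_nonneg _).trans (posPart_le_gfun (hc _).1 (by linarith [hc (Sum.inl i)]) _))
    (fun i hi => by
      linarith [log_two_le_gfun (hc _).1 (by linarith [hc (Sum.inl i)]) hi, Real.log_two_gt_d9])
  have card_right := hX''.neg.mul_card_le_mul_sum hμ β (a := 1 / 4)
    (w := fun i => hfun (c (Sum.inr i)) (X'' i ⬝ᵥ β)) (by norm_num)
    (fun i => hfun_nonneg (hc _).1 (by linarith [hc (Sum.inr i)]) _)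
    (fun i hi => quarter_le_hfun (hc _).1 (hc _).2
      (by simpa only [Pi.neg_apply, neg_dotProduct, Left.nonneg_neg_iff] using hi))
  unfold threePLObjective
  linarith

lemma sum_abs_le_mul_threePLObjective (hμ : 0 ≤ μ) (hX' : Mu1Complex X' μ)
    (hc : ∀ i, 0 ≤ c i ∧ c i < 1) (β : Fin d → ℝ) :
    ∑ i, |X' i ⬝ᵥ β| ≤ (1 + μ) * threePLObjective c X' X'' β := by
  refine (hX'.sum_abs_le_mul_sum_posPart β).trans (mul_le_mul_of_nonneg_left ?_ (by linarith))
  exact le_add_of_le_of_nonneg (sum_le_sum fun i _ => posPart_le_gfun (hc _).1 (hc _).2 _)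
    (sum_nonneg fun i _ => hfun_nonneg (hc _).1 (hc _).2.le _)

theorem stmt15_general (hμ : 0 ≤ μ) (hρ : 0 ≤ ρ)
    (hX'1 : Mu1Complex X' μ) (hX'0 : Mu0Complex X' μ) (hX''0 : Mu0Complex X'' μ)
    (hratio : ∀ η : Fin d → ℝ, ∑ i, |X'' i ⬝ᵥ η| ≤ ρ * ∑ i, |X' i ⬝ᵥ η|)
    (hc : ∀ i, 0 ≤ c i ∧ c i ≤ 1 / 2) :
    ∃ s : ι ⊕ κ → ℝ, (∀ i, 0 ≤ s i) ∧
      (∑ i, s i ≤ (1 + μ) * (8 + (1 + ρ) * √(d * (Fintype.card ι + Fintype.card κ)))) ∧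
      ∀ β : Fin d → ℝ,
        (∀ i, gfun (c (Sum.inl i)) (X' i ⬝ᵥ β) ≤ s (Sum.inl i) * threePLObjective c X' X'' β) ∧
        (∀ i, hfun (c (Sum.inr i)) (X'' i ⬝ᵥ β) ≤ s (Sum.inr i) * threePLObjective c X' X'' β) := by
  set m : ℝ := Fintype.card ι + Fintype.card κ
  have hm' : Fintype.card ι ≤ m := le_add_of_nonneg_right (Nat.cast_nonneg _)
  have hm'' : Fintype.card κ ≤ m := le_add_of_nonneg_left (Nat.cast_nonneg _)
  have hm0 : 0 ≤ m := by positivity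
  have hK : 0 ≤ 1 + μ := by linarith
  have hρK : 0 ≤ ρ * (1 + μ) := by positivity
  refine ⟨Sum.elim (rowSensitivityBound m (1 + μ) (1 + μ) (of X'))
    (rowSensitivityBound m (1 + μ) (ρ * (1 + μ)) (of X'')), ?_, ?_, fun β => ?_⟩
  · exact Sum.rec (rowSensitivityBound_nonneg hm0 hK hK _)
      (rowSensitivityBound_nonneg hm0 hK hρK _)
  · have sum_left := sum_rowSensitivityBound_le (K := 1 + μ) hK (of X') hm'
    have sum_right := sum_rowSensitivityBound_le (K := 1 + μ) hρK (of X'') hm''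
    have const_total : m * (8 * (1 + μ) / m) ≤ 8 * (1 + μ) := by
      rw [mul_div_left_comm]
      exact mul_le_of_le_one_right (by positivity) (div_self_le_one m)
    rw [Fintype.card_fin] at sum_left sum_right
    rw [Fintype.sum_sum_type]
    simp only [Sum.elim_inl, Sum.elim_inr]
    linarith
  · have hmf := card_le_mul_threePLObjective hμ hX'0 hX''0 hc β
    have hl1 : ∑ i, |X' i ⬝ᵥ β| ≤ (1 + μ) * threePLObjective c X' X'' β :=
      sum_abs_le_mul_threePLObjective hμ hX'1 (fun i => ⟨(hc i).1, by linarith [hc i]⟩) β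
    have hl1' : ∑ i, |X'' i ⬝ᵥ β| ≤ ρ * (1 + μ) * threePLObjective c X' X'' β := by
      rw [mul_assoc]
      exact (hratio β).trans (mul_le_mul_of_nonneg_left hl1 hρ)
    have log_two_le_one : Real.log 2 ≤ 1 := by linarith [Real.log_two_lt_d9]
    refine ⟨fun i => le_rowSensitivityBound_mul hm' hmf hl1 ?_,
      fun i => le_rowSensitivityBound_mul hm'' hmf hl1' ?_⟩
    · exact (gfun_le_two_mul_log_two_add_abs (hc _).2 _).trans (add_le_add (by linarith) le_rfl)
    · exact (hfun_le_log_two_add_abs (hc _).1 _).trans (add_le_add (by linarith) le_rfl)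

end Objective

lemma total_sensitivity_constant_le {μ m E : ℝ} (hμ : 1 ≤ μ) (hm : 1 ≤ m) (hE : 0 ≤ E) :
    (1 + μ) * (8 + (1 + 2 * μ) * √(2 * m)) ≤ 170 * μ ^ 2 * √m + 7 * E * μ := by
  have sqrt_le : √(2 * m) ≤ 2 * √m := by
    rw [Real.sqrt_mul two_pos.le]
    exact mul_le_mul_of_nonneg_right (Real.sqrt_le_iff.2 (by norm_num)) (Real.sqrt_nonneg m)
  have one_le : 1 ≤ √m := Real.one_le_sqrt.2 hm
  calc (1 + μ) * (8 + (1 + 2 * μ) * √(2 * m))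
      ≤ (2 * μ) * (8 * (μ * √m) + (3 * μ) * (2 * √m)) := by
        gcongr
        · linarith
        · nlinarith
        · linarith
    _ = 28 * (μ ^ 2 * √m) := by ring
    _ ≤ 170 * (μ ^ 2 * √m) := by gcongr; norm_num
    _ ≤ 170 * μ ^ 2 * √m + 7 * E * μ := by
        rw [← mul_assoc]
        exact le_add_of_nonneg_right (by positivity)

/-- Total sensitivity bound for the 3PL objective `f₁ + f₂`: there exist nonnegative
sensitivity upper bounds `s_i` summing to at most `170 μ² √m + 7 E μ` (with
`m = m' + m''`). -/
theorem stmt15 {m' m'' : ℕ} (hm' : 1 ≤ m') (hm'' : 1 ≤ m'') (μ : ℝ) (hμ : 1 ≤ μ)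
    (X' : Fin m' → Fin 2 → ℝ) (X'' : Fin m'' → Fin 2 → ℝ)
    (hX'1 : Mu1Complex X' μ) (hX'0 : Mu0Complex X' μ)
    (hX''1 : Mu1Complex X'' μ) (hX''0 : Mu0Complex X'' μ)
    (hratio : ∀ η : Fin 2 → ℝ, ∑ i, |X'' i ⬝ᵥ η| ≤ 2 * μ * ∑ i, |X' i ⬝ᵥ η|)
    (c : Fin m' ⊕ Fin m'' → ℝ) (hc : ∀ i, 0 < c i ∧ c i < 1 / 2)
    (E : ℝ) (hE : ∀ i, Real.log (1 / c i) ≤ E) :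
    ∃ s : Fin m' ⊕ Fin m'' → ℝ, (∀ i, 0 ≤ s i) ∧
      (∑ i, s i ≤ 170 * μ ^ 2 * Real.sqrt ((m' : ℝ) + (m'' : ℝ)) + 7 * E * μ) ∧
      ∀ β : Fin 2 → ℝ,
        (∀ i : Fin m',
          gfun (c (Sum.inl i)) (X' i ⬝ᵥ β) ≤
            s (Sum.inl i) *
              ((∑ i', gfun (c (Sum.inl i')) (X' i' ⬝ᵥ β)) +
                ∑ i', hfun (c (Sum.inr i')) (X'' i' ⬝ᵥ β))) ∧
        (∀ i : Fin m'',
          hfun (c (Sum.inr i)) (X'' i ⬝ᵥ β) ≤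
            s (Sum.inr i) *
              ((∑ i', gfun (c (Sum.inl i')) (X' i' ⬝ᵥ β)) +
                ∑ i', hfun (c (Sum.inr i')) (X'' i' ⬝ᵥ β))) := by
  have hE_nonneg : 0 ≤ E := by
    obtain ⟨hc_pos, hc_lt⟩ := hc (Sum.inl ⟨0, hm'⟩)
    exact (Real.log_nonneg (one_le_one_div hc_pos (by linarith))).trans (hE _)
  obtain ⟨s, hs_nonneg, hs_sum, hs⟩ := stmt15_general (by linarith) (by linarith)
    hX'1 hX'0 hX''0 hratio fun i => ⟨(hc i).1.le, (hc i).2.le⟩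
  simp only [Fintype.card_fin, Nat.cast_ofNat] at hs_sum
  have hm : (1 : ℝ) ≤ m' + m'' := mod_cast hm'.trans (Nat.le_add_right _ _)
  exact ⟨s, hs_nonneg, hs_sum.trans (total_sensitivity_constant_le hμ hm hE_nonneg), hs⟩
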